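/- There exist constants C' > 0 and β < 0, depending only on A, φ, μ and the chosen Haar family, such that for all k, m ∈ ℕ and every a ∈ H₀ satisfying ‖D(a·h) − a·D(h)‖_{L²(μ)} ≤ ‖h‖_{L²(μ)} for all h ∈ H₀, one has ‖π_k(a) − π_{k+m}(a)‖_∞ ≤ C' Σ_{n=k}^{k+m−1} e^{nβ}, where ‖·‖_∞ denotes the supremum norm on Σ_A. -/

import Mathlib

open MeasureTheory Filter
open scoped ENNReal NNReal

namespace SFT

variable {l : ℕ}

/-- The one-sided subshift of finite type determined by the `l × l` matrix `A`:
infinite sequences with transitions allowed by `A`. -/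
abbrev SigmaA (l : ℕ) (A : Matrix (Fin l) (Fin l) ℕ) : Type :=
  {ω : ℕ → Fin l // ∀ k, A (ω k) (ω (k + 1)) = 1}

/-- The left shift `σ` on `SigmaA l A`. -/
def shift {A : Matrix (Fin l) (Fin l) ℕ} (ω : SigmaA l A) : SigmaA l A :=
  ⟨fun n => ω.1 (n + 1), fun k => ω.2 (k + 1)⟩

/-- Birkhoff sums `S_k φ = ∑_{m<k} φ ∘ σ^m`. -/
def birkhoff {A : Matrix (Fin l) (Fin l) ℕ} (φ : SigmaA l A → ℝ) (k : ℕ) (ω : SigmaA l A) : ℝ :=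
  ∑ m ∈ Finset.range k, φ (shift^[m] ω)

/-- The matrix `A` has `0`-`1` entries and is irreducible and aperiodic
(some power of `A` has all entries strictly positive). -/
def Primitive (A : Matrix (Fin l) (Fin l) ℕ) : Prop :=
  (∀ i j, A i j = 0 ∨ A i j = 1) ∧ ∃ n : ℕ, 0 < n ∧ ∀ i j, 0 < (A ^ n) i j

/-- A finite word is admissible, i.e. belongs to `Σ_A^*`. -/
def Admissible (A : Matrix (Fin l) (Fin l) ℕ) (x : List (Fin l)) : Prop :=
  x ≠ [] ∧ ∀ (i : ℕ) (h : i + 1 < x.length), A (x[i]'(by omega)) (x[i + 1]'h) = 1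

/-- The cylinder set `[x]` of a finite word (the empty word gives all of `Σ_A`). -/
def cylinder (A : Matrix (Fin l) (Fin l) ℕ) (x : List (Fin l)) : Set (SigmaA l A) :=
  {ω | ∀ (i : ℕ) (h : i < x.length), ω.1 i = x[i]'h}

/-- The initial word `(ω_1, …, ω_k)` of `ω`. -/
def wordPrefix {A : Matrix (Fin l) (Fin l) ℕ} (ω : SigmaA l A) (k : ℕ) : List (Fin l) :=
  List.ofFn (fun i : Fin k => ω.1 i)

/-- `μ` is a Gibbs measure for the potential `φ` with pressure `P`:
`c⁻¹ ≤ μ([ω_1,…,ω_k]) / exp(S_kφ(ω) − kP) ≤ c` for some `c > 1`. -/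
def IsGibbs {A : Matrix (Fin l) (Fin l) ℕ} (φ : SigmaA l A → ℝ) (P : ℝ)
    (μ : Measure (SigmaA l A)) : Prop :=
  ∃ c : ℝ, 1 < c ∧ ∀ (ω : SigmaA l A) (k : ℕ), 0 < k →
    c⁻¹ ≤ (μ (cylinder A (wordPrefix ω k))).toReal / Real.exp (birkhoff φ k ω - k * P) ∧
      (μ (cylinder A (wordPrefix ω k))).toReal / Real.exp (birkhoff φ k ω - k * P) ≤ c

/-- `φ` is Hölder continuous with respect to the metric `d(ω,υ) = 2^{-(ω ∧ υ)}`: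
there are `C` and an exponent `s > 0` with `|φ(ω) − φ(υ)| ≤ C ⬝ d(ω,υ)^s`, i.e.
`|φ(ω) − φ(υ)| ≤ C ⬝ 2^{-sn}` whenever `ω` and `υ` agree in their first `n` coordinates. -/
def HolderCont {A : Matrix (Fin l) (Fin l) ℕ} (φ : SigmaA l A → ℝ) : Prop :=
  ∃ C s : ℝ, 0 < s ∧ ∀ (ω υ : SigmaA l A) (n : ℕ),
    (∀ i < n, ω.1 i = υ.1 i) → |φ ω - φ υ| ≤ C * (2 : ℝ) ^ (-(s * n))

/-- `α(x)`: the number of children of the word `x` (the row sum of `A` at the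
last letter of `x`). -/
def alpha (A : Matrix (Fin l) (Fin l) ℕ) (x : List (Fin l)) : ℕ :=
  match x.getLast? with
  | some a => ∑ i, A a i
  | none => 0

/-- The `m`-th child `x θ_x⁻¹(m)` of the word `x`, the ordering of the children
being given by `θinv x`. -/
def child (θinv : List (Fin l) → ℕ → Fin l) (x : List (Fin l)) (m : ℕ) : List (Fin l) :=
  x ++ [θinv x m]

/-- The characteristic function of the cylinder `[x]`, as a function on `Σ_A`. -/
noncomputable def indC (A : Matrix (Fin l) (Fin l) ℕ) (x : List (Fin l)) : SigmaA l A → ℂ :=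
  (cylinder A x).indicator 1

/-- The `L²(μ)` inner product of two functions (conjugate linear in the first slot). -/
noncomputable def innerMu (A : Matrix (Fin l) (Fin l) ℕ) (μ : Measure (SigmaA l A))
    (f g : SigmaA l A → ℂ) : ℂ :=
  ∫ ω, (starRingEnd ℂ) (f ω) * g ω ∂μ

/-- The Haar function `e_{x,j} = ∑_m μ([xθ_x⁻¹(m)])^{-1/2} ⟨f_{x,m}, U_x f_{x,j}⟩_x χ_{[xθ_x⁻¹(m)]}`
as a function on `Σ_A`; here `u x m j = ⟨f_{x,m}, U_x f_{x,j}⟩_x` are the matrix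
coefficients of `U_x` in the orthonormal basis `(f_{x,m})_m`. -/
noncomputable def haarFun (A : Matrix (Fin l) (Fin l) ℕ) (μ : Measure (SigmaA l A))
    (θinv : List (Fin l) → ℕ → Fin l) (u : List (Fin l) → ℕ → ℕ → ℝ)
    (x : List (Fin l)) (j : ℕ) : SigmaA l A → ℂ := fun ω =>
  ∑ m ∈ Finset.range (alpha A x),
    ((((Real.sqrt ((μ (cylinder A (child θinv x m))).toReal))⁻¹ * u x m j : ℝ) : ℂ)) *
      indC A (child θinv x m) ω

/-- `H₀`: the complex linear span of the characteristic functions of cylinder sets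
of admissible words, together with `χ_{Σ_A}` (the cylinder of the empty word). -/
noncomputable def H0 (A : Matrix (Fin l) (Fin l) ℕ) : Submodule ℂ (SigmaA l A → ℂ) :=
  Submodule.span ℂ {f | ∃ x : List (Fin l), (x = [] ∨ Admissible A x) ∧ f = indC A x}

/-- The operator `D` (the Dirac operator on the dense domain `H₀`, extended to all
functions by the same formula; on `H₀` all but finitely many summands vanish). -/
noncomputable def Dop (A : Matrix (Fin l) (Fin l) ℕ) (μ : Measure (SigmaA l A))
    (θinv : List (Fin l) → ℕ → Fin l) (u : List (Fin l) → ℕ → ℕ → ℝ)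
    (h : SigmaA l A → ℂ) : SigmaA l A → ℂ := fun ω =>
  (∑ a : Fin l,
      (((μ (cylinder A [a])).toReal : ℂ))⁻¹ * innerMu A μ (indC A [a]) h * indC A [a] ω)
    - innerMu A μ (indC A []) h * indC A [] ω
    + ∑' y : List (Fin l),
        Set.indicator {y : List (Fin l) | Admissible A y}
          (fun y => ((((alpha A y : ℝ) - 1) / (μ (cylinder A y)).toReal : ℝ) : ℂ) *
            ∑ j ∈ Finset.range (alpha A y - 1),
              innerMu A μ (haarFun A μ θinv u y j) h * haarFun A μ θinv u y j ω) y

/-- The projections `π_k`:  `π_0(a) = (∫ a dμ) χ_{Σ_A}`,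
`π_{k+1}(a) = ∑_{x ∈ Σ} μ([x])⁻¹ (∫_{[x]} a dμ) χ_{[x]}
  + ∑_{m=1}^{k} ∑_{x ∈ Σ_A^m} ∑_{j=1}^{α(x)−1} (∫ a e_{x,j} dμ) e_{x,j}`. -/
noncomputable def piProj (A : Matrix (Fin l) (Fin l) ℕ) (μ : Measure (SigmaA l A))
    (θinv : List (Fin l) → ℕ → Fin l) (u : List (Fin l) → ℕ → ℕ → ℝ) :
    ℕ → (SigmaA l A → ℂ) → (SigmaA l A → ℂ)
  | 0 => fun a _ => ∫ ω, a ω ∂μ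
  | (k + 1) => fun a ω =>
      (∑ x : Fin l, (((μ (cylinder A [x])).toReal : ℂ))⁻¹ *
          (∫ ω' in cylinder A [x], a ω' ∂μ) * indC A [x] ω)
        + ∑ m ∈ Finset.range k, ∑ w : Fin (m + 1) → Fin l,
            Set.indicator {w : Fin (m + 1) → Fin l | Admissible A (List.ofFn w)}
              (fun w => ∑ j ∈ Finset.range (alpha A (List.ofFn w) - 1),
                (∫ ω', a ω' * haarFun A μ θinv u (List.ofFn w) j ω' ∂μ) *
                  haarFun A μ θinv u (List.ofFn w) j ω) w

/-!
On functions of finitely many coordinates `π_n(a)` is the conditional expectation of `a` on the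
first `n` letters, i.e. a martingale, and `D` is the martingale transform which multiplies the
increment of `a` below a word `x` by `(α(x) - 1) / μ([x])`. The commutator condition applied to
`h = 1` gives `‖D a‖₂ ≤ 1`, so by Cauchy-Schwarz the averages of `D a` over `[x]` and over its
children are at most a constant times `μ([x])^{-1/2}`. Below a branching word, `α(x) ≥ 2`, the
increment of `a` is therefore at most a constant times `μ([x])^{1/2}`; below a non-branching word it
vanishes. Each branching removes a fixed proportion of the measure, and on the way to a branching
word of length `n` at least one of any `l` consecutive letters branches, so `μ([x])` decays
exponentially in `n` along branching words.
-/

section Words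

variable {A : Matrix (Fin l) (Fin l) ℕ}

lemma Admissible.append_singleton {x : List (Fin l)} (hx : Admissible A x) {i : Fin l}
    (hi : A (x.getLast hx.1) i = 1) : Admissible A (x ++ [i]) := by
  refine ⟨by simp, fun k hk => ?_⟩
  simp only [List.length_append, List.length_singleton, Nat.add_lt_add_iff_right] at hk
  rw [List.getElem_append_left hk]
  rcases Nat.lt_or_ge (k + 1) x.length with hk' | hk'
  · rw [List.getElem_append_left hk']
    exact hx.2 k hk'
  · have hk_last : k = x.length - 1 := by omega
    subst hk_last
    simpa [List.getLast_eq_getElem, show x.length - 1 + 1 = x.length by omega] using hi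

lemma Admissible.of_append_singleton {x : List (Fin l)} {i : Fin l}
    (hx : Admissible A (x ++ [i])) (hne : x ≠ []) : Admissible A x := by
  refine ⟨hne, fun k hk => ?_⟩
  have hstep := hx.2 k (by rw [List.length_append]; omega)
  rwa [List.getElem_append_left hk, List.getElem_append_left] at hstep

@[simp]
lemma length_wordPrefix (ω : SigmaA l A) (n : ℕ) : (wordPrefix ω n).length = n := by
  simp [wordPrefix]

@[simp]
lemma wordPrefix_zero (ω : SigmaA l A) : wordPrefix ω 0 = [] := rfl

lemma wordPrefix_succ (ω : SigmaA l A) (n : ℕ) :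
    wordPrefix ω (n + 1) = wordPrefix ω n ++ [ω.1 n] := by
  simp only [wordPrefix, List.ofFn_succ_last, Fin.val_castSucc, Fin.val_last]

lemma wordPrefix_congr {ω υ : SigmaA l A} {n : ℕ} (h : ∀ i < n, ω.1 i = υ.1 i) :
    wordPrefix ω n = wordPrefix υ n :=
  congrArg List.ofFn (funext fun i => h i i.2)

lemma admissible_wordPrefix_succ (ω : SigmaA l A) (n : ℕ) :
    Admissible A (wordPrefix ω (n + 1)) :=
  ⟨fun h => by simpa using congrArg List.length h, fun i hi => by
    simpa only [wordPrefix, List.getElem_ofFn] using ω.2 i⟩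

lemma getLast_wordPrefix_succ (ω : SigmaA l A) (n : ℕ) (h : wordPrefix ω (n + 1) ≠ []) :
    (wordPrefix ω (n + 1)).getLast h = ω.1 n := by
  simp [wordPrefix_succ]

@[simp]
lemma cylinder_nil : cylinder A [] = Set.univ :=
  Set.eq_univ_of_forall fun _ i hi => absurd hi (Nat.not_lt_zero i)

lemma mem_cylinder_append_singleton {x : List (Fin l)} {i : Fin l} {ω : SigmaA l A} :
    ω ∈ cylinder A (x ++ [i]) ↔ ω ∈ cylinder A x ∧ ω.1 x.length = i := by
  simp only [cylinder, Set.mem_ofPred_eq, List.length_append, List.length_singleton]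
  refine ⟨fun h => ⟨fun k hk => ?_, ?_⟩, fun ⟨hx, hi⟩ k hk => ?_⟩
  · rw [h k (by omega), List.getElem_append_left hk]
  · simpa using h x.length (by omega)
  · rcases Nat.lt_succ_iff_lt_or_eq.mp hk with hk | rfl
    · rw [hx k hk, List.getElem_append_left hk]
    · simpa using hi

lemma cylinder_append_singleton_subset (x : List (Fin l)) (i : Fin l) :
    cylinder A (x ++ [i]) ⊆ cylinder A x :=
  fun _ h => (mem_cylinder_append_singleton.mp h).1

lemma disjoint_cylinder_append_singleton (x : List (Fin l)) {i j : Fin l} (hij : i ≠ j) :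
    Disjoint (cylinder A (x ++ [i])) (cylinder A (x ++ [j])) :=
  Set.disjoint_left.mpr fun _ hi hj => hij <|
    (mem_cylinder_append_singleton.mp hi).2.symm.trans (mem_cylinder_append_singleton.mp hj).2

lemma iUnion_cylinder_append_singleton (x : List (Fin l)) :
    ⋃ i, cylinder A (x ++ [i]) = cylinder A x := by
  ext ω
  simp [mem_cylinder_append_singleton]

lemma mem_cylinder_wordPrefix_iff {ω υ : SigmaA l A} {n : ℕ} :
    υ ∈ cylinder A (wordPrefix ω n) ↔ ∀ i < n, υ.1 i = ω.1 i := by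
  simp [cylinder, wordPrefix]

lemma mem_cylinder_wordPrefix (ω : SigmaA l A) (n : ℕ) : ω ∈ cylinder A (wordPrefix ω n) :=
  mem_cylinder_wordPrefix_iff.mpr fun _ _ => rfl

lemma wordPrefix_length_of_mem_cylinder {x : List (Fin l)} {ω : SigmaA l A}
    (h : ω ∈ cylinder A x) : wordPrefix ω x.length = x :=
  List.ext_getElem (by simp) fun i _ hi => by simpa [wordPrefix] using h i hi

lemma cylinder_wordPrefix_antitone (ω : SigmaA l A) :
    Antitone fun n => cylinder A (wordPrefix ω n) :=
  fun _ _ hn _ h => mem_cylinder_wordPrefix_iff.mpr fun i hi =>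
    mem_cylinder_wordPrefix_iff.mp h i (hi.trans_le hn)

lemma measurableSet_cylinder (x : List (Fin l)) : MeasurableSet (cylinder A x) := by
  have heval (i : ℕ) : Measurable fun ω : SigmaA l A => ω.1 i :=
    (measurable_pi_apply i).comp measurable_subtype_coe
  simp only [cylinder, Set.ofPred_forall]
  exact .iInter fun i => .iInter fun _ => heval i (measurableSet_singleton _)

lemma indC_of_mem {x : List (Fin l)} {ω : SigmaA l A} (h : ω ∈ cylinder A x) :
    indC A x ω = 1 :=
  Set.indicator_of_mem h 1

lemma indC_of_notMem {x : List (Fin l)} {ω : SigmaA l A} (h : ω ∉ cylinder A x) :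
    indC A x ω = 0 :=
  Set.indicator_of_notMem h 1

lemma conj_indC (x : List (Fin l)) (ω : SigmaA l A) :
    (starRingEnd ℂ) (indC A x ω) = indC A x ω := by
  by_cases h : ω ∈ cylinder A x
  · rw [indC_of_mem h, map_one]
  · rw [indC_of_notMem h, map_zero]

lemma real_cylinder_wordPrefix_pos {μ : Measure (SigmaA l A)} [IsProbabilityMeasure μ]
    (hpos : ∀ x, Admissible A x → 0 < μ.real (cylinder A x)) (ω : SigmaA l A) (n : ℕ) :
    0 < μ.real (cylinder A (wordPrefix ω n)) := by
  cases n with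
  | zero => simp
  | succ n => exact hpos _ (admissible_wordPrefix_succ ω n)

end Words

/-- `f` only depends on the first `n` coordinates, i.e. it is constant on the cylinders of
length `n`. -/
def DependsOnFirst {A : Matrix (Fin l) (Fin l) ℕ} (n : ℕ) (f : SigmaA l A → ℂ) : Prop :=
  ∀ ω υ : SigmaA l A, (∀ i < n, ω.1 i = υ.1 i) → f ω = f υ

namespace DependsOnFirst

variable {A : Matrix (Fin l) (Fin l) ℕ} {m n : ℕ} {f g : SigmaA l A → ℂ}

lemma mono (hf : DependsOnFirst m f) (hmn : m ≤ n) : DependsOnFirst n f :=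
  fun ω υ h => hf ω υ fun i hi => h i (hi.trans_le hmn)

lemma mul (hf : DependsOnFirst n f) (hg : DependsOnFirst n g) : DependsOnFirst n (f * g) :=
  fun ω υ h => by simp only [Pi.mul_apply, hf ω υ h, hg ω υ h]

lemma sub (hf : DependsOnFirst n f) (hg : DependsOnFirst n g) : DependsOnFirst n (f - g) :=
  fun ω υ h => by simp only [Pi.sub_apply, hf ω υ h, hg ω υ h]

lemma eq_of_mem_cylinder (hf : DependsOnFirst n f) {ω υ : SigmaA l A}
    (h : υ ∈ cylinder A (wordPrefix ω n)) : f υ = f ω :=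
  hf υ ω (mem_cylinder_wordPrefix_iff.mp h)

lemma exists_factor (hf : DependsOnFirst n f) :
    ∃ F : (Fin n → Fin l) → ℂ, ∀ ω, f ω = F fun i => ω.1 i := by
  have hfac : f.FactorsThrough fun (ω : SigmaA l A) (i : Fin n) => ω.1 i :=
    fun ω υ h => hf ω υ fun i hi => congrFun h ⟨i, hi⟩
  exact ⟨Function.extend _ f 0, fun ω => (hfac.extend_apply 0 ω).symm⟩

lemma measurable (hf : DependsOnFirst n f) : Measurable f := by
  obtain ⟨F, hF⟩ := hf.exists_factor
  have hrestrict : Measurable fun (ω : SigmaA l A) (i : Fin n) => ω.1 i :=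
    measurable_pi_lambda _ fun i => (measurable_pi_apply _).comp measurable_subtype_coe
  rw [funext hF]
  exact (Measurable.of_discrete (f := F)).comp hrestrict

lemma memLp (hf : DependsOnFirst n f) (p : ℝ≥0∞) (μ : Measure (SigmaA l A))
    [IsFiniteMeasure μ] : MemLp f p μ := by
  obtain ⟨F, hF⟩ := hf.exists_factor
  refine .of_bound hf.measurable.aestronglyMeasurable (∑ w, ‖F w‖) (ae_of_all _ fun ω => ?_)
  rw [hF ω]
  exact Finset.single_le_sum (f := fun w => ‖F w‖) (fun _ _ => norm_nonneg _) (Finset.mem_univ _)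

lemma integrable (hf : DependsOnFirst n f) (μ : Measure (SigmaA l A)) [IsFiniteMeasure μ] :
    Integrable f μ :=
  memLp_one_iff_integrable.mp (hf.memLp 1 μ)

end DependsOnFirst

lemma dependsOnFirst_indC {A : Matrix (Fin l) (Fin l) ℕ} (x : List (Fin l)) :
    DependsOnFirst x.length (indC A x) := by
  intro ω υ h
  have hmem : ω ∈ cylinder A x ↔ υ ∈ cylinder A x :=
    forall₂_congr fun i hi => by rw [h i hi]
  by_cases hω : ω ∈ cylinder A x
  · rw [indC_of_mem hω, indC_of_mem (hmem.mp hω)]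
  · rw [indC_of_notMem hω, indC_of_notMem (hmem.not.mp hω)]

lemma exists_dependsOnFirst_of_mem_H0 {A : Matrix (Fin l) (Fin l) ℕ} {a : SigmaA l A → ℂ}
    (ha : a ∈ H0 A) : ∃ n, DependsOnFirst n a := by
  induction ha using Submodule.span_induction with
  | mem f hf =>
    obtain ⟨x, -, rfl⟩ := hf
    exact ⟨_, dependsOnFirst_indC x⟩
  | zero => exact ⟨0, fun _ _ _ => rfl⟩
  | add f g _ _ hf hg =>
    obtain ⟨m, hf⟩ := hf
    obtain ⟨n, hg⟩ := hg
    exact ⟨max m n, fun ω υ h => congrArg₂ (· + ·)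
      (hf.mono (le_max_left m n) ω υ h) (hg.mono (le_max_right m n) ω υ h)⟩
  | smul c f _ hf =>
    obtain ⟨n, hf⟩ := hf
    exact ⟨n, fun ω υ h => congrArg (c • ·) (hf ω υ h)⟩

/-! ### Averages over cylinders -/

lemma norm_setAverage_le_eLpNorm_two {X E : Type*} [MeasurableSpace X] [NormedAddCommGroup E]
    [NormedSpace ℝ E] {μ : Measure X} {f : X → E} (hf : MemLp f 2 μ) {s : Set X}
    (hs : μ s ≠ ∞) :
    ‖⨍ x in s, f x ∂μ‖ ≤ (√(μ.real s))⁻¹ * (eLpNorm f 2 μ).toReal := by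
  have henorm : ‖∫ x in s, f x ∂μ‖ₑ ≤ eLpNorm f 2 μ * μ s ^ (1 / 2 : ℝ) :=
    calc ‖∫ x in s, f x ∂μ‖ₑ ≤ eLpNorm f 1 (μ.restrict s) := by
          rw [eLpNorm_one_eq_lintegral_enorm]
          exact enorm_integral_le_lintegral_enorm _
      _ ≤ eLpNorm f 2 (μ.restrict s) * μ s ^ (1 / 2 : ℝ) := by
          have hHölder := eLpNorm_le_eLpNorm_mul_rpow_measure_univ (p := 1) (q := 2)
            one_le_two (hf.restrict s).aestronglyMeasurable
          norm_num at hHölder ⊢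
          exact hHölder
      _ ≤ eLpNorm f 2 μ * μ s ^ (1 / 2 : ℝ) := by
          gcongr
          exact Measure.restrict_le_self
  have hnorm : ‖∫ x in s, f x ∂μ‖ ≤ (eLpNorm f 2 μ).toReal * √(μ.real s) := by
    have hfin : eLpNorm f 2 μ * μ s ^ (1 / 2 : ℝ) ≠ ∞ :=
      ENNReal.mul_ne_top hf.eLpNorm_ne_top (ENNReal.rpow_ne_top_of_nonneg (by norm_num) hs)
    simpa [Real.sqrt_eq_rpow, measureReal_def, ENNReal.toReal_rpow] using
      ENNReal.toReal_mono hfin henorm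
  rw [setAverage_eq, norm_smul, norm_inv, Real.norm_of_nonneg measureReal_nonneg,
    inv_mul_eq_div, inv_mul_eq_div]
  calc ‖∫ x in s, f x ∂μ‖ / μ.real s
      ≤ (eLpNorm f 2 μ).toReal * √(μ.real s) / μ.real s := by gcongr
    _ = (eLpNorm f 2 μ).toReal / √(μ.real s) := by
          rw [mul_div_assoc, Real.sqrt_div_self, div_eq_mul_inv]

/-- The conditional expectation of `f` on the first `n` coordinates: `cylAvg μ n f ω` is the
average of `f` over the cylinder of length `n` around `ω`. On functions of finitely many
coordinates it is the operator `π_n`, see `IsHaarSystem.piProj_eq_cylAvg`. -/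
noncomputable def cylAvg {A : Matrix (Fin l) (Fin l) ℕ} (μ : Measure (SigmaA l A)) (n : ℕ)
    (f : SigmaA l A → ℂ) : SigmaA l A → ℂ := fun ω =>
  ⨍ υ in cylinder A (wordPrefix ω n), f υ ∂μ

section CylAvg

variable {A : Matrix (Fin l) (Fin l) ℕ} {μ : Measure (SigmaA l A)} {m n : ℕ}
  {f g : SigmaA l A → ℂ}

lemma cylAvg_eq (f : SigmaA l A → ℂ) (ω : SigmaA l A) :
    cylAvg μ n f ω = (μ.real (cylinder A (wordPrefix ω n)) : ℂ)⁻¹ *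
      ∫ υ in cylinder A (wordPrefix ω n), f υ ∂μ := by
  rw [cylAvg, setAverage_eq, Complex.real_smul, Complex.ofReal_inv]

lemma cylAvg_zero [IsProbabilityMeasure μ] (f : SigmaA l A → ℂ) (ω : SigmaA l A) :
    cylAvg μ 0 f ω = ∫ υ, f υ ∂μ := by
  simp [cylAvg_eq]

lemma dependsOnFirst_cylAvg (n : ℕ) (f : SigmaA l A → ℂ) : DependsOnFirst n (cylAvg μ n f) :=
  fun ω υ h => by simp only [cylAvg, wordPrefix_congr h]

lemma setIntegral_cylinder_eq_sum (hf : Integrable f μ) (x : List (Fin l)) :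
    ∫ ω in cylinder A x, f ω ∂μ = ∑ i, ∫ ω in cylinder A (x ++ [i]), f ω ∂μ := by
  rw [← integral_iUnion_fintype (fun i => measurableSet_cylinder (x ++ [i]))
    (fun i j hij => disjoint_cylinder_append_singleton x hij) fun i => hf.integrableOn,
    iUnion_cylinder_append_singleton]

lemma setIntegral_cylinder_eq_zero_of_le (hf : Integrable f μ) (hnm : n ≤ m)
    (h : ∀ ω : SigmaA l A, ∫ υ in cylinder A (wordPrefix ω m), f υ ∂μ = 0) (ω : SigmaA l A) :
    ∫ υ in cylinder A (wordPrefix ω n), f υ ∂μ = 0 := by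
  induction m, hnm using Nat.le_induction with
  | base => exact h ω
  | succ m _ ih =>
    refine ih fun ω' => ?_
    rw [setIntegral_cylinder_eq_sum hf]
    refine Finset.sum_eq_zero fun i _ => ?_
    rcases (cylinder A (wordPrefix ω' m ++ [i])).eq_empty_or_nonempty with hempty | ⟨υ, hυ⟩
    · rw [hempty, setIntegral_empty]
    · rw [← wordPrefix_length_of_mem_cylinder hυ]
      simpa using h υ

lemma cylAvg_eq_self {ω : SigmaA l A} (hω : 0 < μ.real (cylinder A (wordPrefix ω n)))
    (hf : DependsOnFirst n f) : cylAvg μ n f ω = f ω := by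
  have hconst : ∀ υ ∈ cylinder A (wordPrefix ω n), f υ = f ω := fun υ => hf.eq_of_mem_cylinder
  rw [cylAvg_eq, setIntegral_congr_fun (measurableSet_cylinder _) hconst, setIntegral_const,
    Complex.real_smul, inv_mul_cancel_left₀ (Complex.ofReal_ne_zero.mpr hω.ne')]

lemma cylAvg_finsetSum {ι : Type*} (s : Finset ι) {F : ι → SigmaA l A → ℂ}
    (hF : ∀ i ∈ s, Integrable (F i) μ) (ω : SigmaA l A) :
    cylAvg μ n (fun υ => ∑ i ∈ s, F i υ) ω = ∑ i ∈ s, cylAvg μ n (F i) ω := by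
  simp only [cylAvg_eq]
  rw [integral_finsetSum s fun i hi => (hF i hi).integrableOn, Finset.mul_sum]

variable [IsFiniteMeasure μ]

lemma setIntegral_mul_cylAvg (hg : DependsOnFirst m g) (hfg : Integrable (fun ω => g ω * f ω) μ)
    (hnm : n ≤ m) (ω : SigmaA l A) :
    ∫ υ in cylinder A (wordPrefix ω n), g υ * cylAvg μ m f υ ∂μ =
      ∫ υ in cylinder A (wordPrefix ω n), g υ * f υ ∂μ := by
  have hgavg : Integrable (fun ω => g ω * cylAvg μ m f ω) μ :=
    (hg.mul (dependsOnFirst_cylAvg m f)).integrable μ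
  rw [← sub_eq_zero, ← integral_sub hgavg.integrableOn hfg.integrableOn]
  have hdiff : Integrable (fun ω => g ω * cylAvg μ m f ω - g ω * f ω) μ := hgavg.sub hfg
  refine setIntegral_cylinder_eq_zero_of_le hdiff hnm (fun ω' => ?_) ω
  rw [integral_sub hgavg.integrableOn hfg.integrableOn, sub_eq_zero]
  have hconst : ∀ υ ∈ cylinder A (wordPrefix ω' m),
      g υ * cylAvg μ m f υ = g ω' * cylAvg μ m f ω' := fun υ hυ =>
    (hg.mul (dependsOnFirst_cylAvg m f)).eq_of_mem_cylinder hυ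
  have hpull : ∀ υ ∈ cylinder A (wordPrefix ω' m), g υ * f υ = g ω' * f υ := fun υ hυ => by
    rw [hg.eq_of_mem_cylinder hυ]
  rw [setIntegral_congr_fun (measurableSet_cylinder _) hconst,
    setIntegral_congr_fun (measurableSet_cylinder _) hpull, setIntegral_const,
    integral_const_mul, ← measure_smul_setAverage f (measure_ne_top μ _)]
  simp only [cylAvg, Complex.real_smul]
  ring

lemma cylAvg_mul_increment_eq_zero (hg : DependsOnFirst m g)
    (hfg : Integrable (fun ω => g ω * f ω) μ) (hnm : n ≤ m) (ω : SigmaA l A) :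
    cylAvg μ n (fun ω => g ω * (cylAvg μ (m + 1) f ω - cylAvg μ m f ω)) ω = 0 := by
  have hint (k : ℕ) (hk : m ≤ k) : Integrable (fun ω => g ω * cylAvg μ k f ω) μ :=
    ((hg.mono hk).mul (dependsOnFirst_cylAvg k f)).integrable μ
  simp only [cylAvg_eq _ ω, mul_sub]
  rw [integral_sub (hint _ m.le_succ).integrableOn (hint _ le_rfl).integrableOn,
    setIntegral_mul_cylAvg (hg.mono m.le_succ) hfg (hnm.trans m.le_succ),
    setIntegral_mul_cylAvg hg hfg hnm, sub_self, mul_zero]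

end CylAvg

/-! ### Haar systems -/

/-- The data entering the definition of the Haar family: `θinv x` enumerates the letters which may
follow `x`, and `u x` is the matrix of the isometry `U_x` in the basis `(f_{x,m})_m`, whose last
column represents `μ([x])^{-1/2} (1, …, 1)`. -/
structure IsHaarSystem (A : Matrix (Fin l) (Fin l) ℕ) (μ : Measure (SigmaA l A))
    (θinv : List (Fin l) → ℕ → Fin l) (u : List (Fin l) → ℕ → ℕ → ℝ) : Prop where
  bijOn : ∀ (x : List (Fin l)) (hx : Admissible A x),
    Set.BijOn (θinv x) (Set.Iio (alpha A x)) {y : Fin l | A (x.getLast hx.1) y = 1}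
  orth : ∀ x, Admissible A x → ∀ j < alpha A x, ∀ j' < alpha A x,
    ∑ m ∈ Finset.range (alpha A x), u x m j * u x m j' = if j = j' then 1 else 0
  last : ∀ x, Admissible A x → ∀ m < alpha A x,
    u x m (alpha A x - 1) = (√(μ.real (cylinder A x)))⁻¹ * √(μ.real (cylinder A (child θinv x m)))

/-- The component of `a` along the Haar functions `e_{x,j}`, `1 ≤ j ≤ α(x) - 1`, of the word `x`;
indices are shifted so that `e_{x,α(x)-1}` is the normalized characteristic function of `[x]`. -/
noncomputable def haarProj (A : Matrix (Fin l) (Fin l) ℕ) (μ : Measure (SigmaA l A))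
    (θinv : List (Fin l) → ℕ → Fin l) (u : List (Fin l) → ℕ → ℕ → ℝ) (x : List (Fin l))
    (a : SigmaA l A → ℂ) : SigmaA l A → ℂ := fun ω =>
  ∑ j ∈ Finset.range (alpha A x - 1),
    (∫ υ, a υ * haarFun A μ θinv u x j υ ∂μ) * haarFun A μ θinv u x j ω

section Haar

variable {A : Matrix (Fin l) (Fin l) ℕ} {μ : Measure (SigmaA l A)}
  {θinv : List (Fin l) → ℕ → Fin l} {u : List (Fin l) → ℕ → ℕ → ℝ}

lemma integral_mul_indC (f : SigmaA l A → ℂ) (x : List (Fin l)) :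
    ∫ ω, f ω * indC A x ω ∂μ = ∫ ω in cylinder A x, f ω ∂μ := by
  rw [← integral_indicator (measurableSet_cylinder x)]
  refine integral_congr_ae (ae_of_all _ fun ω => ?_)
  by_cases h : ω ∈ cylinder A x
  · simp [indC_of_mem h, h]
  · simp [indC_of_notMem h, h]

lemma innerMu_indC (x : List (Fin l)) (h : SigmaA l A → ℂ) :
    innerMu A μ (indC A x) h = ∫ ω in cylinder A x, h ω ∂μ := by
  simp only [innerMu, conj_indC, mul_comm _ (h _), integral_mul_indC]

lemma innerMu_haarFun (x : List (Fin l)) (j : ℕ) (h : SigmaA l A → ℂ) :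
    innerMu A μ (haarFun A μ θinv u x j) h = ∫ ω, h ω * haarFun A μ θinv u x j ω ∂μ := by
  simp only [innerMu, haarFun, map_sum, map_mul, Complex.conj_ofReal, conj_indC, mul_comm _ (h _)]

lemma haarFun_of_notMem {x : List (Fin l)} {ω : SigmaA l A} (h : ω ∉ cylinder A x) (j : ℕ) :
    haarFun A μ θinv u x j ω = 0 := by
  have hchild (m : ℕ) : ω ∉ cylinder A (child θinv x m) :=
    fun hm => h (cylinder_append_singleton_subset x _ hm)
  exact Finset.sum_eq_zero fun m _ => by rw [indC_of_notMem (hchild m), mul_zero]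

lemma haarProj_of_notMem {x : List (Fin l)} {ω : SigmaA l A} (h : ω ∉ cylinder A x)
    (a : SigmaA l A → ℂ) : haarProj A μ θinv u x a ω = 0 := by
  simp [haarProj, haarFun_of_notMem h]

lemma integral_mul_haarFun {a : SigmaA l A → ℂ} (ha : Integrable a μ) (x : List (Fin l)) (j : ℕ) :
    ∫ ω, a ω * haarFun A μ θinv u x j ω ∂μ = ∑ m ∈ Finset.range (alpha A x),
      (((√(μ.real (cylinder A (child θinv x m))))⁻¹ * u x m j : ℝ) : ℂ) *
        ∫ ω in cylinder A (child θinv x m), a ω ∂μ := by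
  have hint (m : ℕ) : Integrable (fun ω => a ω * indC A (child θinv x m) ω) μ :=
    (ha.indicator (measurableSet_cylinder (child θinv x m))).congr <| ae_of_all _ fun ω => by
      by_cases h : ω ∈ cylinder A (child θinv x m)
      · simp [indC_of_mem h, h]
      · simp [indC_of_notMem h, h]
  simp only [haarFun, Finset.mul_sum, mul_left_comm (a _)]
  rw [integral_finsetSum _ fun m _ => (hint m).const_mul _]
  simp only [integral_const_mul, integral_mul_indC, measureReal_def]

namespace IsHaarSystem

lemma sum_row_mul_row (hH : IsHaarSystem A μ θinv u) {x : List (Fin l)} (hx : Admissible A x)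
    {m m' : ℕ} (hm : m < alpha A x) (hm' : m' < alpha A x) :
    ∑ j ∈ Finset.range (alpha A x), u x m j * u x m' j = if m = m' then 1 else 0 := by
  set U : Matrix (Fin (alpha A x)) (Fin (alpha A x)) ℝ := .of fun m j => u x m j with hU
  have hcol : U.transpose * U = 1 := by
    ext j j'
    simpa [Matrix.mul_apply, Matrix.one_apply, hU, Finset.sum_range, Fin.ext_iff] using
      hH.orth x hx j j.2 j' j'.2
  have hrow : U * U.transpose = 1 := mul_eq_one_comm.mp hcol
  simpa [Matrix.mul_apply, Matrix.one_apply, hU, Finset.sum_range] using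
    congrFun₂ hrow ⟨m, hm⟩ ⟨m', hm'⟩

lemma exists_mem_child (hH : IsHaarSystem A μ θinv u) {x : List (Fin l)} (hx : Admissible A x)
    {ω : SigmaA l A} (hω : ω ∈ cylinder A x) :
    ∃ m < alpha A x, ω ∈ cylinder A (child θinv x m) := by
  have hpos : 0 < x.length := List.length_pos_of_ne_nil hx.1
  have hnext : A (x.getLast hx.1) (ω.1 x.length) = 1 := by
    rw [List.getLast_eq_getElem, ← hω _ (Nat.sub_lt hpos one_pos)]
    simpa [Nat.sub_add_cancel hpos] using ω.2 (x.length - 1)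
  obtain ⟨m, hm, hmω⟩ := (hH.bijOn x hx).surjOn hnext
  exact ⟨m, hm, mem_cylinder_append_singleton.mpr ⟨hω, hmω.symm⟩⟩

lemma nontrivial_of_two_le_alpha (hH : IsHaarSystem A μ θinv u) {ω : SigmaA l A} {n : ℕ}
    (hn : 2 ≤ alpha A (wordPrefix ω (n + 1))) : {j | A (ω.1 n) j = 1}.Nontrivial := by
  have hadm := admissible_wordPrefix_succ ω n
  have hbij := hH.bijOn _ hadm
  rw [getLast_wordPrefix_succ] at hbij
  have h₀ : 0 ∈ Set.Iio (alpha A (wordPrefix ω (n + 1))) := by rw [Set.mem_Iio]; omega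
  have h₁ : 1 ∈ Set.Iio (alpha A (wordPrefix ω (n + 1))) := by rw [Set.mem_Iio]; omega
  exact ⟨_, hbij.mapsTo h₀, _, hbij.mapsTo h₁, hbij.injOn.ne h₀ h₁ zero_ne_one⟩

lemma haarFun_eq_of_mem_child (hH : IsHaarSystem A μ θinv u) {x : List (Fin l)}
    (hx : Admissible A x) {m : ℕ} (hm : m < alpha A x) {ω : SigmaA l A}
    (hω : ω ∈ cylinder A (child θinv x m)) (j : ℕ) :
    haarFun A μ θinv u x j ω =
      (((√(μ.real (cylinder A (child θinv x m))))⁻¹ * u x m j : ℝ) : ℂ) := by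
  rw [haarFun, Finset.sum_eq_single_of_mem m (Finset.mem_range.mpr hm), indC_of_mem hω, mul_one,
    measureReal_def]
  intro m' hm' hne
  rw [indC_of_notMem, mul_zero]
  refine Set.disjoint_left.mp (disjoint_cylinder_append_singleton x fun h => hne ?_) hω
  exact (hH.bijOn x hx).injOn (Finset.mem_range.mp hm') hm h.symm

lemma sum_integral_mul_haarFun (hH : IsHaarSystem A μ θinv u) {x : List (Fin l)}
    (hx : Admissible A x) {m : ℕ} (hm : m < alpha A x) {ω : SigmaA l A}
    (hω : ω ∈ cylinder A (child θinv x m)) {a : SigmaA l A → ℂ} (ha : Integrable a μ) :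
    ∑ j ∈ Finset.range (alpha A x),
        (∫ υ, a υ * haarFun A μ θinv u x j υ ∂μ) * haarFun A μ θinv u x j ω =
      (μ.real (cylinder A (child θinv x m)) : ℂ)⁻¹ *
        ∫ υ in cylinder A (child θinv x m), a υ ∂μ := by
  set s : ℕ → ℝ := fun m => √(μ.real (cylinder A (child θinv x m))) with hs
  set I : ℕ → ℂ := fun m => ∫ υ in cylinder A (child θinv x m), a υ ∂μ with hI
  calc _ = ∑ j ∈ Finset.range (alpha A x), (∑ m' ∈ Finset.range (alpha A x),
        (((s m')⁻¹ * u x m' j : ℝ) : ℂ) * I m') * (((s m)⁻¹ * u x m j : ℝ) : ℂ) := by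
        simp only [integral_mul_haarFun ha, hH.haarFun_eq_of_mem_child hx hm hω, hs, hI]
    _ = ∑ m' ∈ Finset.range (alpha A x), (((s m')⁻¹ * (s m)⁻¹ *
        ∑ j ∈ Finset.range (alpha A x), u x m' j * u x m j : ℝ) : ℂ) * I m' := by
        push_cast
        simp only [Finset.sum_mul, Finset.mul_sum]
        rw [Finset.sum_comm]
        exact Finset.sum_congr rfl fun _ _ => Finset.sum_congr rfl fun _ _ => by ring
    _ = (((s m)⁻¹ * (s m)⁻¹ : ℝ) : ℂ) * I m := by
        rw [Finset.sum_eq_single_of_mem m (Finset.mem_range.mpr hm) fun m' hm' hne => by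
          rw [hH.sum_row_mul_row hx (Finset.mem_range.mp hm') hm, if_neg hne]; simp]
        rw [hH.sum_row_mul_row hx hm hm, if_pos rfl, mul_one]
    _ = _ := by
        rw [← mul_inv, Real.mul_self_sqrt measureReal_nonneg, Complex.ofReal_inv]

lemma haarFun_last (hH : IsHaarSystem A μ θinv u)
    (hpos : ∀ x, Admissible A x → 0 < μ.real (cylinder A x)) {x : List (Fin l)}
    (hx : Admissible A x) (ω : SigmaA l A) :
    haarFun A μ θinv u x (alpha A x - 1) ω =
      (((√(μ.real (cylinder A x)))⁻¹ : ℝ) : ℂ) * indC A x ω := by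
  by_cases hω : ω ∈ cylinder A x
  · obtain ⟨m, hm, hmω⟩ := hH.exists_mem_child hx hω
    have hchild := hpos _ (hx.append_singleton ((hH.bijOn x hx).mapsTo hm))
    rw [hH.haarFun_eq_of_mem_child hx hm hmω, hH.last x hx m hm, indC_of_mem hω, mul_one,
      mul_left_comm, child, inv_mul_cancel₀ (Real.sqrt_pos.mpr hchild).ne', mul_one]
  · rw [haarFun_of_notMem hω, indC_of_notMem hω, mul_zero]

lemma haarProj_wordPrefix_succ (hH : IsHaarSystem A μ θinv u)
    (hpos : ∀ x, Admissible A x → 0 < μ.real (cylinder A x)) {a : SigmaA l A → ℂ}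
    (ha : Integrable a μ) (ω : SigmaA l A) (n : ℕ) :
    haarProj A μ θinv u (wordPrefix ω (n + 1)) a ω =
      cylAvg μ (n + 2) a ω - cylAvg μ (n + 1) a ω := by
  set x := wordPrefix ω (n + 1) with hxdef
  have hx : Admissible A x := admissible_wordPrefix_succ ω n
  have hω : ω ∈ cylinder A x := mem_cylinder_wordPrefix ω (n + 1)
  obtain ⟨m, hm, hmω⟩ := hH.exists_mem_child hx hω
  have hchild : child θinv x m = wordPrefix ω (n + 2) := by
    simpa [child, hxdef] using (wordPrefix_length_of_mem_cylinder hmω).symm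
  have hlast : (∫ υ, a υ * haarFun A μ θinv u x (alpha A x - 1) υ ∂μ) *
      haarFun A μ θinv u x (alpha A x - 1) ω = cylAvg μ (n + 1) a ω := by
    simp only [hH.haarFun_last hpos hx, mul_left_comm (a _), integral_const_mul,
      integral_mul_indC, indC_of_mem hω, mul_one]
    rw [mul_right_comm, ← Complex.ofReal_mul, ← mul_inv, Real.mul_self_sqrt measureReal_nonneg,
      Complex.ofReal_inv, cylAvg_eq]
  have hsum := hH.sum_integral_mul_haarFun hx hm hmω ha
  rw [← Nat.sub_add_cancel (Nat.one_le_of_lt hm), Finset.sum_range_succ,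
    hlast, hchild, ← cylAvg_eq] at hsum
  exact eq_sub_of_add_eq hsum

end IsHaarSystem

end Haar

/-! ### The operators `π_n` and `D` as a martingale and a martingale transform -/

/-- The eigenvalue of `D` on the Haar functions of the word `x`; the empty word stands for the
increment `π_1 - π_0`, on which `D` is the identity. -/
noncomputable def diracWeight (A : Matrix (Fin l) (Fin l) ℕ) (μ : Measure (SigmaA l A))
    (x : List (Fin l)) : ℝ :=
  if x = [] then 1 else ((alpha A x : ℝ) - 1) / μ.real (cylinder A x)

section Martingale

variable {A : Matrix (Fin l) (Fin l) ℕ} {μ : Measure (SigmaA l A)}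
  {θinv : List (Fin l) → ℕ → Fin l} {u : List (Fin l) → ℕ → ℕ → ℝ} {a : SigmaA l A → ℂ}

lemma sum_mul_indC_singleton (c : Fin l → ℂ) (ω : SigmaA l A) :
    ∑ i, c i * indC A [i] ω = c (ω.1 0) := by
  have hmem (i : Fin l) : ω ∈ cylinder A [i] ↔ ω.1 0 = i := by
    simpa using mem_cylinder_append_singleton (A := A) (x := []) (i := i)
  rw [Finset.sum_eq_single_of_mem _ (Finset.mem_univ (ω.1 0)) fun i _ hi => by
    rw [indC_of_notMem fun h => hi ((hmem i).mp h).symm, mul_zero]]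
  rw [indC_of_mem ((hmem _).mpr rfl), mul_one]

lemma sum_setIntegral_mul_indC_singleton (f : SigmaA l A → ℂ) (ω : SigmaA l A) :
    ∑ i, (((μ (cylinder A [i])).toReal : ℂ))⁻¹ * (∫ υ in cylinder A [i], f υ ∂μ) *
      indC A [i] ω = cylAvg μ 1 f ω := by
  rw [sum_mul_indC_singleton, cylAvg_eq, wordPrefix_succ, wordPrefix_zero, List.nil_append,
    measureReal_def]

lemma diracWeight_wordPrefix_zero (ω : SigmaA l A) : diracWeight A μ (wordPrefix ω 0) = 1 :=
  if_pos rfl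

lemma diracWeight_of_admissible {x : List (Fin l)} (hx : Admissible A x) :
    diracWeight A μ x = ((alpha A x : ℝ) - 1) / μ.real (cylinder A x) :=
  if_neg hx.1

lemma dependsOnFirst_diracWeight (n : ℕ) :
    DependsOnFirst n fun ω : SigmaA l A => (diracWeight A μ (wordPrefix ω n) : ℂ) :=
  fun ω υ h => by simp only [wordPrefix_congr h]

lemma dependsOnFirst_diracWeight_mul_increment (n : ℕ) (a : SigmaA l A → ℂ) :
    DependsOnFirst (n + 1) fun ω =>
      (diracWeight A μ (wordPrefix ω n) : ℂ) * (cylAvg μ (n + 1) a ω - cylAvg μ n a ω) :=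
  ((dependsOnFirst_diracWeight n).mono n.le_succ).mul <|
    (dependsOnFirst_cylAvg (n + 1) a).sub ((dependsOnFirst_cylAvg n a).mono n.le_succ)

lemma piProj_succ_eq (n : ℕ) (ω : SigmaA l A) :
    piProj A μ θinv u (n + 1) a ω = cylAvg μ 1 a ω +
      ∑ m ∈ Finset.range n, haarProj A μ θinv u (wordPrefix ω (m + 1)) a ω := by
  simp only [piProj, sum_setIntegral_mul_indC_singleton]
  congr 1
  refine Finset.sum_congr rfl fun m _ => ?_
  rw [Finset.sum_eq_single_of_mem (fun i : Fin (m + 1) => ω.1 i) (Finset.mem_univ _)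
    fun w _ hw => ?_]
  · exact Set.indicator_of_mem (s := {w : Fin (m + 1) → Fin l | Admissible A (List.ofFn w)})
      (admissible_wordPrefix_succ ω m) _
  · refine Set.indicator_apply_eq_zero.mpr fun _ => haarProj_of_notMem (fun hω => hw ?_) a
    have hprefix := wordPrefix_length_of_mem_cylinder hω
    rw [List.length_ofFn] at hprefix
    exact (List.ofFn_injective hprefix).symm

namespace IsHaarSystem

variable [IsProbabilityMeasure μ]

lemma piProj_eq_cylAvg (hH : IsHaarSystem A μ θinv u)
    (hpos : ∀ x, Admissible A x → 0 < μ.real (cylinder A x)) (ha : Integrable a μ) (n : ℕ)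
    (ω : SigmaA l A) : piProj A μ θinv u n a ω = cylAvg μ n a ω := by
  cases n with
  | zero => exact (cylAvg_zero a ω).symm
  | succ n =>
    simp only [piProj_succ_eq, hH.haarProj_wordPrefix_succ hpos ha]
    rw [Finset.sum_range_sub fun m => cylAvg μ (m + 1) a ω, zero_add, add_sub_cancel]

lemma tsum_indicator_mul_haarProj (hH : IsHaarSystem A μ θinv u)
    (hpos : ∀ x, Admissible A x → 0 < μ.real (cylinder A x)) {N : ℕ}
    (ha : DependsOnFirst (N + 1) a) (c : List (Fin l) → ℂ) (ω : SigmaA l A) :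
    ∑' y, {y : List (Fin l) | Admissible A y}.indicator
        (fun y => c y * haarProj A μ θinv u y a ω) y =
      ∑ n ∈ Finset.range N,
        c (wordPrefix ω (n + 1)) * (cylAvg μ (n + 2) a ω - cylAvg μ (n + 1) a ω) := by
  have hterm (n : ℕ) : {y : List (Fin l) | Admissible A y}.indicator
      (fun y => c y * haarProj A μ θinv u y a ω) (wordPrefix ω (n + 1)) =
      c (wordPrefix ω (n + 1)) * (cylAvg μ (n + 2) a ω - cylAvg μ (n + 1) a ω) := by
    rw [Set.indicator_of_mem (s := {y : List (Fin l) | Admissible A y})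
      (admissible_wordPrefix_succ ω n), hH.haarProj_wordPrefix_succ hpos (ha.integrable μ)]
  have hself (n : ℕ) (hn : N ≤ n) : cylAvg μ (n + 1) a ω = a ω :=
    cylAvg_eq_self (hpos _ (admissible_wordPrefix_succ ω n)) (ha.mono (by omega))
  have hinj : Function.Injective fun n => wordPrefix ω (n + 1) := fun m n h => by
    simpa using congrArg List.length h
  rw [tsum_eq_sum (s := (Finset.range N).map ⟨_, hinj⟩), Finset.sum_map]
  · exact Finset.sum_congr rfl fun n _ => hterm n
  · intro y hy
    refine Set.indicator_apply_eq_zero.mpr fun hadm => ?_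
    by_cases hω : ω ∈ cylinder A y
    · obtain ⟨n, hn⟩ := Nat.exists_eq_succ_of_ne_zero (List.length_pos_of_ne_nil hadm.1).ne'
      have hyn : wordPrefix ω (n + 1) = y := by
        rw [← Nat.succ_eq_add_one, ← hn, wordPrefix_length_of_mem_cylinder hω]
      have hNn : N ≤ n := not_lt.mp fun h =>
        hy (Finset.mem_map.mpr ⟨n, Finset.mem_range.mpr h, hyn⟩)
      rw [← hyn, hH.haarProj_wordPrefix_succ hpos (ha.integrable μ), hself n hNn,
        hself (n + 1) (by omega), sub_self, mul_zero]
    · rw [haarProj_of_notMem hω, mul_zero]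

lemma dop_eq_sum (hH : IsHaarSystem A μ θinv u)
    (hpos : ∀ x, Admissible A x → 0 < μ.real (cylinder A x)) {N : ℕ}
    (ha : DependsOnFirst (N + 1) a) (ω : SigmaA l A) :
    Dop A μ θinv u a ω = ∑ n ∈ Finset.range (N + 1),
      (diracWeight A μ (wordPrefix ω n) : ℂ) * (cylAvg μ (n + 1) a ω - cylAvg μ n a ω) := by
  have hroot : innerMu A μ (indC A []) a * indC A [] ω = cylAvg μ 0 a ω := by
    rw [innerMu_indC, indC_of_mem (by simp), mul_one, cylAvg_zero, cylinder_nil, setIntegral_univ]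
  have htail := hH.tsum_indicator_mul_haarProj hpos ha
    (fun y => ((((alpha A y : ℝ) - 1) / (μ (cylinder A y)).toReal : ℝ) : ℂ)) ω
  simp only [Dop, innerMu_haarFun]
  rw [hroot]
  simp only [innerMu_indC, sum_setIntegral_mul_indC_singleton]
  rw [Finset.sum_range_succ', diracWeight_wordPrefix_zero, Complex.ofReal_one, one_mul, add_comm]
  congr 1
  simp only [diracWeight_of_admissible (admissible_wordPrefix_succ ω _)]
  exact htail

lemma dependsOnFirst_dop (hH : IsHaarSystem A μ θinv u)
    (hpos : ∀ x, Admissible A x → 0 < μ.real (cylinder A x)) {N : ℕ}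
    (ha : DependsOnFirst (N + 1) a) : DependsOnFirst (N + 1) (Dop A μ θinv u a) := by
  intro ω υ h
  rw [hH.dop_eq_sum hpos ha, hH.dop_eq_sum hpos ha]
  exact Finset.sum_congr rfl fun n hn => (dependsOnFirst_diracWeight_mul_increment n a).mono
    (Finset.mem_range.mp hn) ω υ h

lemma dop_indC_nil (hH : IsHaarSystem A μ θinv u)
    (hpos : ∀ x, Admissible A x → 0 < μ.real (cylinder A x)) (ω : SigmaA l A) :
    Dop A μ θinv u (indC A []) ω = 0 := by
  have hdep : DependsOnFirst 0 (indC A ([] : List (Fin l))) := dependsOnFirst_indC []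
  have hself₀ : cylAvg μ 0 (indC A []) ω = indC A [] ω := cylAvg_eq_self (by simp) hdep
  have hself₁ : cylAvg μ 1 (indC A []) ω = indC A [] ω :=
    cylAvg_eq_self (hpos _ (admissible_wordPrefix_succ ω 0)) (hdep.mono zero_le_one)
  rw [hH.dop_eq_sum hpos (hdep.mono zero_le_one), Finset.sum_range_one, hself₁, hself₀, sub_self,
    mul_zero]

lemma cylAvg_dop (hH : IsHaarSystem A μ θinv u)
    (hpos : ∀ x, Admissible A x → 0 < μ.real (cylinder A x)) {N : ℕ}
    (ha : DependsOnFirst N a) (n : ℕ) (ω : SigmaA l A) :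
    cylAvg μ n (Dop A μ θinv u a) ω = ∑ m ∈ Finset.range n,
      (diracWeight A μ (wordPrefix ω m) : ℂ) * (cylAvg μ (m + 1) a ω - cylAvg μ m a ω) := by
  set T : ℕ → SigmaA l A → ℂ := fun m υ =>
    (diracWeight A μ (wordPrefix υ m) : ℂ) * (cylAvg μ (m + 1) a υ - cylAvg μ m a υ)
  have hTdep (m : ℕ) : DependsOnFirst (m + 1) (T m) := dependsOnFirst_diracWeight_mul_increment m a
  have hweight_mul (m : ℕ) :
      Integrable (fun υ => (diracWeight A μ (wordPrefix υ m) : ℂ) * a υ) μ :=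
    (((dependsOnFirst_diracWeight m).mono (le_max_left m N)).mul
      (ha.mono (le_max_right m N))).integrable μ
  have hdop : Dop A μ θinv u a = fun υ => ∑ m ∈ Finset.range (max N n + 1), T m υ :=
    funext <| hH.dop_eq_sum hpos (ha.mono (by omega))
  calc cylAvg μ n (Dop A μ θinv u a) ω
      = ∑ m ∈ Finset.range (max N n + 1), cylAvg μ n (T m) ω := by
        rw [hdop, cylAvg_finsetSum _ fun m _ => (hTdep m).integrable μ]
    _ = ∑ m ∈ Finset.range n, cylAvg μ n (T m) ω := by
        refine (Finset.sum_subset (Finset.range_subset_range.mpr (by omega)) fun m _ hm => ?_).symm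
        exact cylAvg_mul_increment_eq_zero (dependsOnFirst_diracWeight m) (hweight_mul m)
          (by simpa using hm) ω
    _ = ∑ m ∈ Finset.range n, T m ω := Finset.sum_congr rfl fun m hm =>
        cylAvg_eq_self (real_cylinder_wordPrefix_pos hpos ω n)
          ((hTdep m).mono (Finset.mem_range.mp hm))

lemma diracWeight_mul_increment (hH : IsHaarSystem A μ θinv u)
    (hpos : ∀ x, Admissible A x → 0 < μ.real (cylinder A x)) {N : ℕ}
    (ha : DependsOnFirst N a) (n : ℕ) (ω : SigmaA l A) :
    (diracWeight A μ (wordPrefix ω n) : ℂ) * (cylAvg μ (n + 1) a ω - cylAvg μ n a ω) =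
      cylAvg μ (n + 1) (Dop A μ θinv u a) ω - cylAvg μ n (Dop A μ θinv u a) ω := by
  rw [hH.cylAvg_dop hpos ha, hH.cylAvg_dop hpos ha, Finset.sum_range_succ, add_sub_cancel_left]

end IsHaarSystem

end Martingale

/-! ### Measures of cylinders -/

/-- Every admissible extension of a word by one letter retains at least the proportion `δ` of the
measure of its cylinder. The empty word is included. -/
def UniformSplitting (A : Matrix (Fin l) (Fin l) ℕ) (μ : Measure (SigmaA l A)) (δ : ℝ) : Prop :=
  ∀ x i, Admissible A (x ++ [i]) → δ * μ.real (cylinder A x) ≤ μ.real (cylinder A (x ++ [i]))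

section Splitting

variable {A : Matrix (Fin l) (Fin l) ℕ} {μ : Measure (SigmaA l A)} {δ : ℝ}

lemma ne_of_forall_subsingleton_of_nontrivial {ι : Type*} {R : ι → ι → Prop} {f : ℕ → ι}
    (hf : ∀ k, R (f k) (f (k + 1))) {p q t : ℕ} (hpq : p < q) (hqt : q ≤ t)
    (hsub : ∀ s, p ≤ s → s < t → {y | R (f s) y}.Subsingleton)
    (ht : {y | R (f t) y}.Nontrivial) : f p ≠ f q := by
  intro hfpq
  have hfollow : ∀ s, q + s ≤ t → f (p + s) = f (q + s) := by
    intro s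
    induction s with
    | zero => exact fun _ => hfpq
    | succ s ih =>
      intro hs
      refine hsub (p + s) (by omega) (by omega) (hf (p + s)) ?_
      rw [Set.mem_ofPred_eq, ih (by omega)]
      exact hf (q + s)
  have hreturn : f (p + (t - q)) = f t := by
    rw [hfollow (t - q) (by omega), Nat.add_sub_cancel' hqt]
  refine Set.not_nontrivial_iff.mpr (hsub (p + (t - q)) (by omega) (by omega)) ?_
  rwa [hreturn]

/- Up to its first branching point the path `f` is deterministic, so it cannot repeat a vertex:
a repetition would trap it in a cycle without branching. -/
lemma exists_nontrivial_mem_Ico {ι : Type*} [Fintype ι] {R : ι → ι → Prop} {f : ℕ → ι}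
    (hf : ∀ k, R (f k) (f (k + 1))) {i n : ℕ} (hin : i ≤ n) (hn : {y | R (f n) y}.Nontrivial) :
    ∃ t ∈ Set.Ico i (i + Fintype.card ι), {y | R (f t) y}.Nontrivial := by
  classical
  have hex : ∃ t, i ≤ t ∧ {y | R (f t) y}.Nontrivial := ⟨n, hin, hn⟩
  set t := Nat.find hex
  obtain ⟨hit, hbranch⟩ := Nat.find_spec hex
  have hfirst : ∀ s, i ≤ s → s < t → {y | R (f s) y}.Subsingleton := fun s his hst =>
    Set.not_nontrivial_iff.mp fun h => Nat.find_min hex hst ⟨his, h⟩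
  have hne : ∀ p q, i ≤ p → p < q → q ≤ t → f p ≠ f q := fun p q hip hpq hqt =>
    ne_of_forall_subsingleton_of_nontrivial hf hpq hqt (fun s hs => hfirst s (hip.trans hs)) hbranch
  have hinj : Function.Injective fun k : Fin (t - i + 1) => f (i + k) := fun p q hpq => by
    rcases lt_trichotomy p q with h | h | h
    · exact absurd hpq (hne _ _ (by omega) (by omega) (by omega))
    · exact h
    · exact absurd hpq.symm (hne _ _ (by omega) (by omega) (by omega))
  have hcard := Fintype.card_le_of_injective _ hinj
  rw [Fintype.card_fin] at hcard
  exact ⟨t, ⟨hit, by omega⟩, hbranch⟩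

lemma le_exp_mul_exp_of_contraction {f : ℕ → ℝ} {ε : ℝ} {N M : ℕ} (hε : 0 ≤ ε) (hN : 0 < N)
    (hf₀ : ∀ n, 0 ≤ f n) (hf₁ : ∀ n, f n ≤ 1)
    (hcontr : ∀ p, 0 < p → p + N ≤ M → f (p + N) ≤ (1 - ε) * f p) {n : ℕ} (hn : n ≤ M) :
    f n ≤ Real.exp ε * Real.exp (n * -(ε / N)) := by
  have hN' : (0 : ℝ) < N := Nat.cast_pos.mpr hN
  induction n using Nat.strong_induction_on with
  | _ n ih =>
    rw [← Real.exp_add]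
    rcases le_or_gt n N with hnN | hNn
    · refine (hf₁ n).trans (Real.one_le_exp ?_)
      have hnN' : (n : ℝ) ≤ N := Nat.cast_le.mpr hnN
      have : (n : ℝ) * (ε / N) ≤ ε := by
        rw [mul_div_left_comm]
        exact mul_le_of_le_one_right hε (div_le_one_of_le₀ hnN' hN'.le)
      linarith
    · obtain ⟨p, rfl⟩ := Nat.exists_eq_add_of_le' hNn.le
      calc f (p + N) ≤ (1 - ε) * f p := hcontr p (by omega) hn
        _ ≤ Real.exp (-ε) * (Real.exp ε * Real.exp (p * -(ε / N))) := by
          gcongr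
          · exact hf₀ p
          · exact Real.one_sub_le_exp_neg ε
          · exact ih p (by omega) (by omega)
        _ = Real.exp (ε + (p + N : ℕ) * -(ε / N)) := by
          rw [← Real.exp_add, ← Real.exp_add]
          congr 1
          push_cast
          field_simp
          ring

namespace UniformSplitting

lemma mul_real_wordPrefix_le_succ (h : UniformSplitting A μ δ) (ω : SigmaA l A) (n : ℕ) :
    δ * μ.real (cylinder A (wordPrefix ω n)) ≤ μ.real (cylinder A (wordPrefix ω (n + 1))) := by
  rw [wordPrefix_succ]
  exact h _ _ (wordPrefix_succ ω n ▸ admissible_wordPrefix_succ ω n)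

variable [IsProbabilityMeasure μ]

lemma pos (hδ : 0 < δ) (h : UniformSplitting A μ δ) (x : List (Fin l)) (hx : Admissible A x) :
    0 < μ.real (cylinder A x) := by
  induction x using List.reverseRecOn with
  | nil => exact absurd rfl hx.1
  | append_singleton x i ih =>
    refine lt_of_lt_of_le (mul_pos hδ ?_) (h x i hx)
    rcases eq_or_ne x [] with rfl | hne
    · simp
    · exact ih (hx.of_append_singleton hne)

lemma le_one (h : UniformSplitting A μ δ) (ω : SigmaA l A) : δ ≤ 1 := by
  simpa using (h.mul_real_wordPrefix_le_succ ω 0).trans measureReal_le_one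

lemma real_wordPrefix_add_two_le (h : UniformSplitting A μ δ) {ω : SigmaA l A} {n : ℕ}
    (hn : {j | A (ω.1 n) j = 1}.Nontrivial) :
    μ.real (cylinder A (wordPrefix ω (n + 2))) ≤
      (1 - δ) * μ.real (cylinder A (wordPrefix ω (n + 1))) := by
  obtain ⟨j, hj, hne⟩ := hn.exists_ne (ω.1 (n + 1))
  set x := wordPrefix ω (n + 1)
  have hadm : Admissible A (x ++ [j]) := (admissible_wordPrefix_succ ω n).append_singleton <| by
    rwa [getLast_wordPrefix_succ]
  have hunion := measureReal_union (μ := μ)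
    (disjoint_cylinder_append_singleton (A := A) x hne) (measurableSet_cylinder _)
  have hsub := measureReal_mono (μ := μ) <| Set.union_subset
    (cylinder_append_singleton_subset (A := A) x j)
    (cylinder_append_singleton_subset x (ω.1 (n + 1)))
  rw [wordPrefix_succ]
  linarith [h x j hadm]

lemma real_wordPrefix_succ_le_exp (hδ : 0 < δ) (h : UniformSplitting A μ δ) {ω : SigmaA l A}
    {n : ℕ} (hn : {j | A (ω.1 n) j = 1}.Nontrivial) :
    μ.real (cylinder A (wordPrefix ω (n + 1))) ≤
      Real.exp δ * Real.exp ((n + 1 : ℕ) * -(δ / l)) := by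
  have hanti : Antitone fun k => μ.real (cylinder A (wordPrefix ω k)) := fun _ _ hk =>
    measureReal_mono (cylinder_wordPrefix_antitone ω hk)
  refine le_exp_mul_exp_of_contraction (f := fun k => μ.real (cylinder A (wordPrefix ω k)))
    hδ.le (Fin.pos (ω.1 0)) (fun _ => measureReal_nonneg) (fun _ => measureReal_le_one)
    (fun p hp hpn => ?_) le_rfl
  obtain ⟨t, ⟨hpt, htp⟩, ht⟩ := exists_nontrivial_mem_Ico (R := fun i j => A i j = 1) ω.2
    (i := p - 1) (by omega) hn
  rw [Fintype.card_fin] at htp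
  calc μ.real (cylinder A (wordPrefix ω (p + l)))
      ≤ μ.real (cylinder A (wordPrefix ω (t + 2))) := hanti (by omega)
    _ ≤ (1 - δ) * μ.real (cylinder A (wordPrefix ω (t + 1))) := h.real_wordPrefix_add_two_le ht
    _ ≤ (1 - δ) * μ.real (cylinder A (wordPrefix ω p)) :=
      mul_le_mul_of_nonneg_left (hanti (by omega)) (sub_nonneg.mpr (h.le_one ω))

end UniformSplitting

end Splitting

/-! ### Increments of `π_n` -/

section Increments

variable {A : Matrix (Fin l) (Fin l) ℕ} {μ : Measure (SigmaA l A)} [IsProbabilityMeasure μ]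
  {θinv : List (Fin l) → ℕ → Fin l} {u : List (Fin l) → ℕ → ℕ → ℝ} {a : SigmaA l A → ℂ} {δ : ℝ}

namespace IsHaarSystem

lemma norm_cylAvg_succ_sub_le_sqrt (hH : IsHaarSystem A μ θinv u) (hδ : 0 < δ)
    (hsplit : UniformSplitting A μ δ) {N : ℕ} (ha : DependsOnFirst N a)
    (hDa : eLpNorm (Dop A μ θinv u a) 2 μ ≤ 1) {n : ℕ} {ω : SigmaA l A}
    (hweight : (μ.real (cylinder A (wordPrefix ω n)))⁻¹ ≤ diracWeight A μ (wordPrefix ω n)) :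
    ‖cylAvg μ (n + 1) a ω - cylAvg μ n a ω‖ ≤
      2 * (√δ)⁻¹ * √(μ.real (cylinder A (wordPrefix ω n))) := by
  set M := μ.real (cylinder A (wordPrefix ω n))
  have hM : 0 < M := real_cylinder_wordPrefix_pos (hsplit.pos hδ) ω n
  have hD : MemLp (Dop A μ θinv u a) 2 μ :=
    (hH.dependsOnFirst_dop (hsplit.pos hδ) (ha.mono N.le_succ)).memLp 2 μ
  have havg (k : ℕ) (hk : δ * M ≤ μ.real (cylinder A (wordPrefix ω k))) :
      ‖cylAvg μ k (Dop A μ θinv u a) ω‖ ≤ (√(δ * M))⁻¹ := by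
    refine (norm_setAverage_le_eLpNorm_two hD (measure_ne_top μ _)).trans ?_
    calc (√(μ.real (cylinder A (wordPrefix ω k))))⁻¹ * (eLpNorm (Dop A μ θinv u a) 2 μ).toReal
        ≤ (√(μ.real (cylinder A (wordPrefix ω k))))⁻¹ := mul_le_of_le_one_right (by positivity)
          (ENNReal.toReal_mono ENNReal.one_ne_top hDa)
      _ ≤ (√(δ * M))⁻¹ := by gcongr
  have hprod : M⁻¹ * ‖cylAvg μ (n + 1) a ω - cylAvg μ n a ω‖ ≤ 2 * (√(δ * M))⁻¹ :=
    calc M⁻¹ * ‖cylAvg μ (n + 1) a ω - cylAvg μ n a ω‖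
        ≤ ‖(diracWeight A μ (wordPrefix ω n) : ℂ)‖ * ‖cylAvg μ (n + 1) a ω - cylAvg μ n a ω‖ := by
          rw [Complex.norm_real]
          gcongr
          exact hweight.trans (le_abs_self _)
      _ = ‖cylAvg μ (n + 1) (Dop A μ θinv u a) ω - cylAvg μ n (Dop A μ θinv u a) ω‖ := by
          rw [← norm_mul, hH.diracWeight_mul_increment (hsplit.pos hδ) ha]
      _ ≤ (√(δ * M))⁻¹ + (√(δ * M))⁻¹ := norm_sub_le_of_le
          (havg _ (hsplit.mul_real_wordPrefix_le_succ ω n))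
          (havg _ (mul_le_of_le_one_left hM.le (hsplit.le_one ω)))
      _ = 2 * (√(δ * M))⁻¹ := (two_mul _).symm
  calc ‖cylAvg μ (n + 1) a ω - cylAvg μ n a ω‖
      ≤ M * (2 * (√(δ * M))⁻¹) := (inv_mul_le_iff₀ hM).mp hprod
    _ = 2 * (√δ)⁻¹ * √M := by
      rw [Real.sqrt_mul hδ.le, mul_inv]
      nth_rewrite 1 [← Real.mul_self_sqrt hM.le]
      field_simp

lemma norm_cylAvg_succ_sub_le_exp (hH : IsHaarSystem A μ θinv u) (hδ : 0 < δ)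
    (hsplit : UniformSplitting A μ δ) {N : ℕ} (ha : DependsOnFirst N a)
    (hDa : eLpNorm (Dop A μ θinv u a) 2 μ ≤ 1) (n : ℕ) (ω : SigmaA l A) :
    ‖cylAvg μ (n + 1) a ω - cylAvg μ n a ω‖ ≤
      2 * (√δ)⁻¹ * Real.exp (δ / 2) * Real.exp (n * (-(δ / l) / 2)) := by
  have hpos := hsplit.pos hδ
  cases n with
  | zero =>
    refine (hH.norm_cylAvg_succ_sub_le_sqrt hδ hsplit ha hDa ?_).trans ?_
    · rw [diracWeight_wordPrefix_zero]
      simp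
    · simpa using le_mul_of_one_le_right (by positivity) (Real.one_le_exp (by positivity))
  | succ n =>
    have hadm := admissible_wordPrefix_succ ω n
    rcases le_or_gt 2 (alpha A (wordPrefix ω (n + 1))) with hα | hα
    · have hweight : (μ.real (cylinder A (wordPrefix ω (n + 1))))⁻¹ ≤
          diracWeight A μ (wordPrefix ω (n + 1)) := by
        have hα' : (2 : ℝ) ≤ alpha A (wordPrefix ω (n + 1)) := by exact_mod_cast hα
        rw [diracWeight_of_admissible hadm, inv_eq_one_div]
        gcongr
        linarith
      refine (hH.norm_cylAvg_succ_sub_le_sqrt hδ hsplit ha hDa hweight).trans ?_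
      rw [mul_assoc _ (Real.exp _)]
      gcongr
      calc √(μ.real (cylinder A (wordPrefix ω (n + 1))))
          ≤ √(Real.exp δ * Real.exp ((n + 1 : ℕ) * -(δ / l))) := Real.sqrt_le_sqrt <|
            hsplit.real_wordPrefix_succ_le_exp hδ (hH.nontrivial_of_two_le_alpha hα)
        _ = Real.exp (δ / 2) * Real.exp ((n + 1 : ℕ) * (-(δ / l) / 2)) := by
          rw [← Real.exp_add, ← Real.exp_half, ← Real.exp_add]
          ring_nf
    · rw [← hH.haarProj_wordPrefix_succ hpos (ha.integrable μ), haarProj,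
        show alpha A (wordPrefix ω (n + 1)) - 1 = 0 by omega, Finset.sum_range_zero, norm_zero]
      positivity

lemma eLpNorm_dop_le_one_of_commutator (hH : IsHaarSystem A μ θinv u)
    (hpos : ∀ x, Admissible A x → 0 < μ.real (cylinder A x))
    (hcomm : ∀ h ∈ H0 A, eLpNorm (fun ω =>
      Dop A μ θinv u (fun υ => a υ * h υ) ω - a ω * Dop A μ θinv u h ω) 2 μ ≤ eLpNorm h 2 μ) :
    eLpNorm (Dop A μ θinv u a) 2 μ ≤ 1 := by
  have hone : indC A [] = fun _ => 1 := funext fun ω => indC_of_mem (by simp)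
  have h := hcomm (indC A []) (Submodule.subset_span ⟨[], .inl rfl, rfl⟩)
  simp only [hH.dop_indC_nil hpos, mul_zero, sub_zero] at h
  simpa [hone, eLpNorm_const, IsProbabilityMeasure.ne_zero] using h

end IsHaarSystem

theorem piProj_cauchy_bound_general (hH : IsHaarSystem A μ θinv u) (hδ : 0 < δ)
    (hsplit : UniformSplitting A μ δ) :
    ∃ C' β : ℝ, 0 < C' ∧ β < 0 ∧ ∀ k m : ℕ, ∀ a ∈ H0 A,
      eLpNorm (Dop A μ θinv u a) 2 μ ≤ 1 → ∀ ω : SigmaA l A,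
      ‖piProj A μ θinv u k a ω - piProj A μ θinv u (k + m) a ω‖ ≤
        C' * ∑ n ∈ Finset.Ico k (k + m), Real.exp (n * β) := by
  obtain ⟨ω₀⟩ := nonempty_of_isProbabilityMeasure μ
  have hl : (0 : ℝ) < l := Nat.cast_pos.mpr (Fin.pos (ω₀.1 0))
  refine ⟨2 * (√δ)⁻¹ * Real.exp (δ / 2), -(δ / l) / 2, by positivity,
    by linarith [div_pos hδ hl], fun k m a ha hDa ω => ?_⟩
  obtain ⟨N, haN⟩ := exists_dependsOnFirst_of_mem_H0 ha
  simp only [hH.piProj_eq_cylAvg (hsplit.pos hδ) (haN.integrable μ)]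
  rw [← dist_eq_norm, Finset.mul_sum]
  refine dist_le_Ico_sum_of_dist_le (f := fun n => cylAvg μ n a ω) (Nat.le_add_right k m)
    fun {n} _ _ => ?_
  rw [dist_comm, dist_eq_norm]
  exact hH.norm_cylAvg_succ_sub_le_exp hδ hsplit haN hDa n ω

end Increments

/-! ### Gibbs measures -/

section Gibbs

variable {A : Matrix (Fin l) (Fin l) ℕ} {φ : SigmaA l A → ℝ} {P : ℝ} {μ : Measure (SigmaA l A)}

lemma Primitive.exists_succ (hA : Primitive A) (i : Fin l) : ∃ j, A i j = 1 := by
  obtain ⟨h01, n, hn, hpos⟩ := hA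
  obtain ⟨n, rfl⟩ := Nat.exists_eq_succ_of_ne_zero hn.ne'
  by_contra! hne
  have hzero : ∀ j, A i j = 0 := fun j => (h01 i j).resolve_right (hne j)
  have hrow : (A ^ (n + 1)) i i = 0 := by simp [pow_succ', Matrix.mul_apply, hzero]
  exact (hpos i i).ne' hrow

lemma cylinder_nonempty (hA : ∀ i, ∃ j, A i j = 1) {x : List (Fin l)} (hx : Admissible A x) :
    (cylinder A x).Nonempty := by
  choose f hf using hA
  set g : ℕ → Fin l := Nat.rec (x.head hx.1) fun k i => x[k + 1]?.getD (f i)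
  have hg_succ (k : ℕ) : g (k + 1) = x[k + 1]?.getD (f (g k)) := rfl
  have hg (k : ℕ) (hk : k < x.length) : g k = x[k] := by
    cases k with
    | zero => exact List.head_eq_getElem hx.1
    | succ k => rw [hg_succ, List.getElem?_eq_getElem hk, Option.getD_some]
  refine ⟨⟨g, fun k => ?_⟩, hg⟩
  rcases lt_or_ge (k + 1) x.length with hk | hk
  · rw [hg k (by omega), hg (k + 1) hk]
    exact hx.2 k hk
  · rw [hg_succ, List.getElem?_eq_none hk, Option.getD_none]
    exact hf (g k)

lemma exp_birkhoff_succ (φ : SigmaA l A → ℝ) (P : ℝ) (n : ℕ) (ω : SigmaA l A) :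
    Real.exp (birkhoff φ (n + 1) ω - (n + 1 : ℕ) * P) =
      Real.exp (φ (shift^[n] ω) - P) * Real.exp (birkhoff φ n ω - n * P) := by
  rw [← Real.exp_add, birkhoff, Finset.sum_range_succ, ← birkhoff]
  congr 1
  push_cast
  ring

namespace IsGibbs

lemma real_cylinder_wordPrefix_succ_pos (hG : IsGibbs φ P μ) (ω : SigmaA l A) (n : ℕ) :
    0 < μ.real (cylinder A (wordPrefix ω (n + 1))) := by
  obtain ⟨c, hc, h⟩ := hG
  exact (div_pos_iff_of_pos_right (Real.exp_pos _)).mp <|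
    (inv_pos.mpr (zero_lt_one.trans hc)).trans_le (h ω (n + 1) n.succ_pos).1

lemma exists_forall_le_exp_sub [IsProbabilityMeasure μ] (hG : IsGibbs φ P μ) :
    ∃ κ : ℝ, 0 < κ ∧ ∀ ω : SigmaA l A, κ ≤ Real.exp (φ ω - P) := by
  obtain ⟨ω₀⟩ := nonempty_of_isProbabilityMeasure μ
  obtain ⟨ω₁, hmin⟩ : ∃ ω₁ : SigmaA l A, ∀ ω : SigmaA l A,
      μ.real (cylinder A (wordPrefix ω₁ 1)) ≤ μ.real (cylinder A (wordPrefix ω 1)) := by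
    obtain ⟨_, ⟨ω₁, rfl⟩, hmin⟩ := Set.exists_min_image (Set.range fun ω : SigmaA l A => ω.1 0)
      (fun i => μ.real (cylinder A [i])) (Set.toFinite _) ⟨_, ω₀, rfl⟩
    exact ⟨ω₁, fun ω => hmin _ ⟨ω, rfl⟩⟩
  have ⟨c, hc, h⟩ := hG
  have hc₀ : 0 < c := zero_lt_one.trans hc
  refine ⟨c⁻¹ * μ.real (cylinder A (wordPrefix ω₁ 1)),
    mul_pos (inv_pos.mpr hc₀) (hG.real_cylinder_wordPrefix_succ_pos ω₁ 0), fun ω => ?_⟩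
  have hupper := (div_le_iff₀ (Real.exp_pos _)).mp (h ω 1 one_pos).2
  simp only [birkhoff, Finset.sum_range_one, Function.iterate_zero_apply, Nat.cast_one,
    one_mul] at hupper
  exact (inv_mul_le_iff₀ hc₀).mpr ((hmin ω).trans hupper)

lemma exists_uniformSplitting [IsProbabilityMeasure μ] (hG : IsGibbs φ P μ)
    (hA : ∀ i, ∃ j, A i j = 1) : ∃ δ, 0 < δ ∧ UniformSplitting A μ δ := by
  obtain ⟨κ, hκ, hφ⟩ := hG.exists_forall_le_exp_sub
  obtain ⟨c, hc, h⟩ := hG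
  have hc₀ : 0 < c := zero_lt_one.trans hc
  have hupper (ω : SigmaA l A) (n : ℕ) :
      μ.real (cylinder A (wordPrefix ω n)) ≤ c * Real.exp (birkhoff φ n ω - n * P) := by
    cases n with
    | zero => simpa [birkhoff] using hc.le
    | succ n => exact (div_le_iff₀ (Real.exp_pos _)).mp (h ω (n + 1) n.succ_pos).2
  refine ⟨c⁻¹ * κ * c⁻¹, mul_pos (mul_pos (inv_pos.mpr hc₀) hκ) (inv_pos.mpr hc₀), fun x i hx => ?_⟩
  obtain ⟨ω, hω⟩ := cylinder_nonempty hA hx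
  have hx_eq : wordPrefix ω x.length = x :=
    wordPrefix_length_of_mem_cylinder (cylinder_append_singleton_subset x i hω)
  have hxi_eq : wordPrefix ω (x.length + 1) = x ++ [i] := by
    simpa using wordPrefix_length_of_mem_cylinder hω
  rw [← hxi_eq, ← congrArg (cylinder A) hx_eq]
  set n := x.length
  calc c⁻¹ * κ * c⁻¹ * μ.real (cylinder A (wordPrefix ω n))
      ≤ c⁻¹ * κ * c⁻¹ * (c * Real.exp (birkhoff φ n ω - n * P)) := by
        gcongr
        exact hupper ω n
    _ = c⁻¹ * (κ * Real.exp (birkhoff φ n ω - n * P)) := by field_simp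
    _ ≤ c⁻¹ * (Real.exp (φ (shift^[n] ω) - P) * Real.exp (birkhoff φ n ω - n * P)) := by
        gcongr
        exact hφ _
    _ = c⁻¹ * Real.exp (birkhoff φ (n + 1) ω - (n + 1 : ℕ) * P) := by rw [exp_birkhoff_succ]
    _ ≤ μ.real (cylinder A (wordPrefix ω (n + 1))) :=
        (le_div_iff₀ (Real.exp_pos _)).mp (h ω (n + 1) n.succ_pos).1

end IsGibbs

end Gibbs

/-- There are `C' > 0` and `β < 0` such that for all `k, m ∈ ℕ` and every
`a ∈ H₀` with `‖[D, π(a)]‖ ≤ 1` on `H₀`, one has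
`‖π_k(a) − π_{k+m}(a)‖_∞ ≤ C' ∑_{n=k}^{k+m−1} e^{nβ}`. -/
theorem piProj_cauchy_bound
    (hl : 2 ≤ l) (A : Matrix (Fin l) (Fin l) ℕ) (hA : Primitive A)
    (φ : SigmaA l A → ℝ) (hφ : HolderCont φ) (P : ℝ)
    (μ : Measure (SigmaA l A)) [IsProbabilityMeasure μ] (hGibbs : IsGibbs φ P μ)
    (θinv : List (Fin l) → ℕ → Fin l)
    (hθ : ∀ (x : List (Fin l)) (hx : Admissible A x),
      Set.BijOn (θinv x) (Set.Iio (alpha A x)) {y : Fin l | A (x.getLast hx.1) y = 1})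
    (u : List (Fin l) → ℕ → ℕ → ℝ)
    (hu_orth : ∀ x, Admissible A x → ∀ j < alpha A x, ∀ j' < alpha A x,
      ∑ m ∈ Finset.range (alpha A x), u x m j * u x m j' = if j = j' then 1 else 0)
    (hu_last : ∀ x, Admissible A x → ∀ m < alpha A x,
      u x m (alpha A x - 1) =
        (Real.sqrt ((μ (cylinder A x)).toReal))⁻¹ *
          Real.sqrt ((μ (cylinder A (child θinv x m))).toReal)) :
    ∃ C' β : ℝ, 0 < C' ∧ β < 0 ∧ ∀ k m : ℕ, 1 ≤ k → 1 ≤ m → ∀ a ∈ H0 A,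
      (∀ h ∈ H0 A,
      eLpNorm (fun ω => Dop A μ θinv u (fun ω' => a ω' * h ω') ω - a ω * Dop A μ θinv u h ω) 2 μ
        ≤ eLpNorm h 2 μ) →
      ∀ ω : SigmaA l A, ‖piProj A μ θinv u k a ω - piProj A μ θinv u (k + m) a ω‖ ≤
        C' * ∑ n ∈ Finset.Ico k (k + m), Real.exp (n * β) := by
  obtain ⟨δ, hδ, hsplit⟩ := hGibbs.exists_uniformSplitting hA.exists_succ
  have hH : IsHaarSystem A μ θinv u := ⟨hθ, hu_orth, hu_last⟩
  obtain ⟨C', β, hC', hβ, hbound⟩ := piProj_cauchy_bound_general hH hδ hsplit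
  exact ⟨C', β, hC', hβ, fun k m _ _ a ha hcomm =>
    hbound k m a ha (hH.eLpNorm_dop_le_one_of_commutator (hsplit.pos hδ) hcomm)⟩

end SFT
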